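/- arXiv:1301.7321 — 5 statements merged into one kernel-verified Lean document; each statement's English description precedes it below -/
import Mathlib

section
/- Let (Σ, I, →, ≼) be a WSTS, let P ⊆ Σ be downward-closed, and define the backward-reachability sequence U_0 := Σ \ P, U_{i+1} := U_i ∪ Pre(U_i). Suppose U_L = U_{L+1} for some L. Then Cover ⊆ P if and only if I ∩ U_L = ∅. Moreover, if I ∩ U_L = ∅, then Σ \ U_L contains I, is contained in P, and satisfies Post(Σ \ U_L) ⊆ Σ \ U_L. -/
/-!
A set `X` has all its successors in `Y` exactly when it avoids the predecessors of `Yᶜ`. For the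
reflexive transitive closure of the transition relation this says that every state reachable from
`I` lies in `P` if and only if `I` avoids the states from which `Pᶜ` is reachable. Once the
backward-reachability sequence of `Pᶜ` stabilizes, its value is the least superset of `Pᶜ` closed
under predecessors, which is that very set of states. Passing from the reachable states to the
cover changes nothing, because `P` is downward-closed. For the transition relation itself the same
duality turns closure of `U L` under predecessors into closure of its complement under successors.
-/

/-- Upward closure of a set w.r.t. a quasi-order. -/
def UpClosure {σ : Type*} (le : σ → σ → Prop) (X : Set σ) : Set σ := {y | ∃ x ∈ X, le x y}

/-- Downward closure of a set w.r.t. a quasi-order. -/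
def DownClosure {σ : Type*} (le : σ → σ → Prop) (X : Set σ) : Set σ := {y | ∃ x ∈ X, le y x}

/-- Successors of a set under a transition relation. -/
def PostSet {σ : Type*} (tr : σ → σ → Prop) (X : Set σ) : Set σ := {y | ∃ x ∈ X, tr x y}

/-- Predecessors of a set under a transition relation. -/
def PreSet {σ : Type*} (tr : σ → σ → Prop) (X : Set σ) : Set σ := {y | ∃ x ∈ X, tr y x}

/-- `le` is a well-quasi-order: reflexive, transitive, and every infinite sequence
has indices `i < j` with `f i ≤ f j`. -/
def IsWqo {σ : Type*} (le : σ → σ → Prop) : Prop :=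
  Reflexive le ∧ Transitive le ∧ ∀ f : ℕ → σ, ∃ i j : ℕ, i < j ∧ le (f i) (f j)

/-- WSTS compatibility: a larger state can simulate a transition in several steps. -/
def Compat {σ : Type*} (tr le : σ → σ → Prop) : Prop :=
  ∀ s₁ s₂ t₁, tr s₁ s₂ → le s₁ t₁ → ∃ t₂, Relation.ReflTransGen tr t₁ t₂ ∧ le s₂ t₂

/-- Strong compatibility: a larger state can simulate a transition in one step. -/
def StrongCompat {σ : Type*} (tr le : σ → σ → Prop) : Prop :=
  ∀ s₁ s₂ t₁, tr s₁ s₂ → le s₁ t₁ → ∃ t₂, tr t₁ t₂ ∧ le s₂ t₂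

/-- `StepN tr k x y` means there is a path of length exactly `k` from `x` to `y`. -/
def StepN {σ : Type*} (tr : σ → σ → Prop) : ℕ → σ → σ → Prop
  | 0 => Eq
  | n+1 => fun x z => ∃ y, tr x y ∧ StepN tr n y z

/-- The set of `le`-minimal elements of `Y`. -/
def MinSet {σ : Type*} (le : σ → σ → Prop) (Y : Set σ) : Set σ :=
  {y ∈ Y | ∀ z ∈ Y, le z y → le y z}

section Transition

open Relation

variable {σ : Type*} {le tr : σ → σ → Prop} {X Y P : Set σ}

theorem downClosure_subset_iff [Std.Refl le] (hP : DownClosure le P ⊆ P) :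
    DownClosure le X ⊆ P ↔ X ⊆ P :=
  ⟨fun h x hx => h ⟨x, hx, refl_of le x⟩, fun h _ ⟨x, hx, hyx⟩ => hP ⟨x, h hx, hyx⟩⟩

theorem preSet_mono (h : X ⊆ Y) : PreSet tr X ⊆ PreSet tr Y :=
  fun _ ⟨y, hy, hxy⟩ => ⟨y, h hy, hxy⟩

theorem postSet_subset_iff_subset_compl_preSet :
    PostSet tr X ⊆ Y ↔ X ⊆ (PreSet tr Yᶜ)ᶜ :=
  ⟨fun h x hx ⟨_, hy, hxy⟩ => hy (h ⟨x, hx, hxy⟩),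
    fun h y ⟨_, hx, hxy⟩ => by_contra fun hy => h hx ⟨y, hy, hxy⟩⟩

theorem postSet_compl_subset_compl_iff : PostSet tr Xᶜ ⊆ Xᶜ ↔ PreSet tr X ⊆ X := by
  rw [postSet_subset_iff_subset_compl_preSet, compl_compl, Set.compl_subset_compl]

theorem subset_preSet_reflTransGen : X ⊆ PreSet (ReflTransGen tr) X :=
  fun x hx => ⟨x, hx, .refl⟩

theorem preSet_preSet_reflTransGen_subset :
    PreSet tr (PreSet (ReflTransGen tr) X) ⊆ PreSet (ReflTransGen tr) X :=
  fun _ ⟨_, ⟨z, hz, hyz⟩, hxy⟩ => ⟨z, hz, .head hxy hyz⟩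

theorem preSet_reflTransGen_subset (hXY : X ⊆ Y) (hY : PreSet tr Y ⊆ Y) :
    PreSet (ReflTransGen tr) X ⊆ Y := by
  rintro x ⟨z, hz, hxz⟩
  induction hxz using ReflTransGen.head_induction_on with
  | refl => exact hXY hz
  | head hxy _ hy => exact hY ⟨_, hy, hxy⟩

end Transition

/-- `U` is the backward-reachability sequence of the set `B` of bad states: `U i` collects the
states from which `B` can be reached in at most `i` transitions. The sequence is characterized by
its recursion so that it can be instantiated with any given sequence of sets. -/
structure IsBackwardReachSeq {σ : Type*} (tr : σ → σ → Prop) (B : Set σ) (U : ℕ → Set σ) :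
    Prop where
  zero : U 0 = B
  succ : ∀ i, U (i + 1) = U i ∪ PreSet tr (U i)

namespace IsBackwardReachSeq

open Relation

variable {σ : Type*} {tr : σ → σ → Prop} {B : Set σ} {U : ℕ → Set σ} {L : ℕ}

theorem monotone (hU : IsBackwardReachSeq tr B U) : Monotone U :=
  monotone_nat_of_le_succ fun i => Set.subset_union_left.trans_eq (hU.succ i).symm

theorem subset_apply (hU : IsBackwardReachSeq tr B U) (i : ℕ) : B ⊆ U i :=
  hU.zero.symm.trans_subset (hU.monotone i.zero_le)

theorem apply_subset_preSet_reflTransGen (hU : IsBackwardReachSeq tr B U) (i : ℕ) :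
    U i ⊆ PreSet (ReflTransGen tr) B := by
  induction i with
  | zero => exact hU.zero.trans_subset subset_preSet_reflTransGen
  | succ i ih =>
    rw [hU.succ]
    exact Set.union_subset ih ((preSet_mono ih).trans preSet_preSet_reflTransGen_subset)

theorem preSet_apply_subset (hU : IsBackwardReachSeq tr B U) (hL : U L = U (L + 1)) :
    PreSet tr (U L) ⊆ U L :=
  Set.union_eq_left.1 ((hU.succ L).symm.trans hL.symm)

theorem apply_eq_preSet_reflTransGen (hU : IsBackwardReachSeq tr B U) (hL : U L = U (L + 1)) :
    U L = PreSet (ReflTransGen tr) B :=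
  (hU.apply_subset_preSet_reflTransGen L).antisymm
    (preSet_reflTransGen_subset (hU.subset_apply L) (hU.preSet_apply_subset hL))

end IsBackwardReachSeq

theorem stmt3_general {σ : Type*} {le tr : σ → σ → Prop} {I P : Set σ} {U : ℕ → Set σ} {L : ℕ}
    [Std.Refl le] (hP : DownClosure le P ⊆ P) (hU : IsBackwardReachSeq tr Pᶜ U)
    (hL : U L = U (L + 1)) :
    (DownClosure le {y | ∃ x ∈ I, Relation.ReflTransGen tr x y} ⊆ P ↔ I ∩ U L = ∅) ∧
      (I ∩ U L = ∅ →
        I ⊆ (U L)ᶜ ∧ (U L)ᶜ ⊆ P ∧ PostSet tr ((U L)ᶜ) ⊆ (U L)ᶜ) := by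
  have avoids_iff : I ⊆ (U L)ᶜ ↔ I ∩ U L = ∅ :=
    Set.subset_compl_iff_disjoint_right.trans Set.disjoint_iff_inter_eq_empty
  have cover_subset_iff :
      DownClosure le (PostSet (Relation.ReflTransGen tr) I) ⊆ P ↔ I ⊆ (U L)ᶜ := by
    rw [downClosure_subset_iff hP, postSet_subset_iff_subset_compl_preSet,
      hU.apply_eq_preSet_reflTransGen hL]
  exact ⟨cover_subset_iff.trans avoids_iff, fun h => ⟨avoids_iff.2 h,
    Set.compl_subset_comm.1 (hU.subset_apply L),
    postSet_compl_subset_compl_iff.2 (hU.preSet_apply_subset hL)⟩⟩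

/-- Correctness of the backward-reachability sequence once it stabilizes. -/
theorem stmt3 {σ : Type*} (le tr : σ → σ → Prop) (I : Set σ)
    (hwqo : IsWqo le) (hIfin : I.Finite) (hcompat : Compat tr le)
    (P : Set σ) (hP : P = DownClosure le P)
    (U : ℕ → Set σ) (hU0 : U 0 = Pᶜ) (hUs : ∀ i, U (i+1) = U i ∪ PreSet tr (U i))
    (L : ℕ) (hL : U L = U (L+1)) :
    (DownClosure le {y | ∃ x ∈ I, Relation.ReflTransGen tr x y} ⊆ P ↔ I ∩ U L = ∅) ∧
      (I ∩ U L = ∅ →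
        I ⊆ (U L)ᶜ ∧ (U L)ᶜ ⊆ P ∧ PostSet tr ((U L)ᶜ) ⊆ (U L)ᶜ) :=
  have : Std.Refl le := ⟨hwqo.1⟩
  stmt3_general hP.symm.subset ⟨hU0, hUs⟩ hL
end

section
/- Let (Σ, I, →, ≼) be a WSTS, let P ⊆ Σ be downward-closed, and let R = (R_0, …, R_N) with R_0 = ↓I be a vector of downward-closed subsets of Σ satisfying invariants (I1)–(I4). Let 1 ≤ m ≤ N and let b ∈ Σ satisfy ↑{b} ∩ I = ∅ and Pre(↑{b}) ∩ (R_m \ ↑{b}) = ∅ (i.e. b is a valid generalization relative to R_m). Then the vector R' obtained from R by replacing R_k with R_k \ ↑{b} for all 1 ≤ k ≤ m again consists of downward-closed sets and satisfies invariants (I1)–(I4). -/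
section Closure

variable {σ : Type*} {le tr : σ → σ → Prop} {X Y : Set σ}

theorem IsWqo.isPreorder (h : IsWqo le) : IsPreorder σ le where
  refl := h.1
  trans _ _ _ := @h.2.1 _ _ _

theorem subset_downClosure [Std.Refl le] : X ⊆ DownClosure le X :=
  fun x hx => ⟨x, hx, refl_of le x⟩

theorem mem_upClosure_of_le [IsTrans σ le] {x y : σ} (hx : x ∈ UpClosure le X) (hxy : le x y) :
    y ∈ UpClosure le X :=
  let ⟨z, hz, hzx⟩ := hx
  ⟨z, hz, trans_of le hzx hxy⟩

theorem disjoint_upClosure_downClosure [IsTrans σ le] (h : Disjoint (UpClosure le X) Y) :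
    Disjoint (UpClosure le X) (DownClosure le Y) :=
  Set.disjoint_left.mpr fun _ hx ⟨_, hz, hxz⟩ =>
    h.notMem_of_mem_left (mem_upClosure_of_le hx hxz) hz

theorem sdiff_upClosure_eq_downClosure [IsPreorder σ le] (hX : X = DownClosure le X) :
    X \ UpClosure le Y = DownClosure le (X \ UpClosure le Y) := by
  refine subset_downClosure.antisymm ?_
  rintro y ⟨x, ⟨hx, hxY⟩, hyx⟩
  exact ⟨hX.ge ⟨x, hx, hyx⟩, fun hy => hxY (mem_upClosure_of_le hy hyx)⟩

theorem postSet_mono (h : X ⊆ Y) : PostSet tr X ⊆ PostSet tr Y :=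
  fun _ ⟨x, hx, hxy⟩ => ⟨x, h hx, hxy⟩

theorem disjoint_postSet_left_iff : Disjoint (PostSet tr X) Y ↔ Disjoint (PreSet tr Y) X := by
  simp only [Set.disjoint_left]
  exact ⟨fun h x ⟨y, hy, hxy⟩ hx => h ⟨x, hx, hxy⟩ hy,
    fun h y ⟨x, hx, hxy⟩ hy => h ⟨y, hy, hxy⟩ hx⟩

end Closure

section Frames

variable {σ : Type*} {le tr : σ → σ → Prop} {I P B : Set σ} {N m k : ℕ} {R : ℕ → Set σ}

/-- The frames of property-directed reachability: vectors `(R 0, …, R N)` of downward-closed sets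
satisfying the invariants (I1)–(I4), which are the last four fields in this order. The values `R i`
for `i > N` are unconstrained. -/
structure IsFrameVector (le tr : σ → σ → Prop) (I P : Set σ) (N : ℕ) (R : ℕ → Set σ) : Prop where
  eq_downClosure : ∀ i ≤ N, R i = DownClosure le (R i)
  init_subset : ∀ i ≤ N, I ⊆ R i
  postSet_subset : ∀ i < N, PostSet tr (R i) ⊆ R (i + 1)
  subset_succ : ∀ i < N, R i ⊆ R (i + 1)
  subset_safe : ∀ i < N, R i ⊆ P

/-- Blocking `B` up to level `m`: the upward closure of `B` is removed from `R 1, …, R m`.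
Upward-closed sets are blocked by giving a generating set `B`, which is `{b}` for a single state. -/
def blockFrames (le : σ → σ → Prop) (B : Set σ) (m : ℕ) (R : ℕ → Set σ) (k : ℕ) : Set σ :=
  if 1 ≤ k ∧ k ≤ m then R k \ UpClosure le B else R k

theorem blockFrames_of_lt (h : m < k) : blockFrames le B m R k = R k :=
  if_neg fun hk => hk.2.not_gt h

theorem blockFrames_of_le (hR0 : Disjoint (UpClosure le B) (R 0)) (h : k ≤ m) :
    blockFrames le B m R k = R k \ UpClosure le B := by
  rcases k.eq_zero_or_pos with rfl | hk
  · exact hR0.symm.sdiff_eq_left.symm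
  · exact if_pos ⟨hk, h⟩

theorem blockFrames_subset : blockFrames le B m R k ⊆ R k := by
  unfold blockFrames
  split_ifs
  exacts [Set.sdiff_subset, subset_rfl]

theorem sdiff_upClosure_subset_blockFrames : R k \ UpClosure le B ⊆ blockFrames le B m R k := by
  unfold blockFrames
  split_ifs
  exacts [subset_rfl, Set.sdiff_subset]

namespace IsFrameVector

theorem monotoneOn (hR : IsFrameVector le tr I P N R) : MonotoneOn R (Set.Iic N) :=
  monotoneOn_of_le_add_one Set.ordConnected_Iic fun k _ _ hk => hR.subset_succ k hk

theorem blockFrames_eq_downClosure [IsPreorder σ le] (hR : IsFrameVector le tr I P N R)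
    (hk : k ≤ N) :
    blockFrames le B m R k = DownClosure le (blockFrames le B m R k) := by
  unfold blockFrames
  split_ifs
  exacts [sdiff_upClosure_eq_downClosure (hR.eq_downClosure k hk), hR.eq_downClosure k hk]

theorem init_subset_blockFrames (hR : IsFrameVector le tr I P N R)
    (hR0 : Disjoint (UpClosure le B) (R 0)) (hk : k ≤ N) : I ⊆ blockFrames le B m R k :=
  have hI : Disjoint I (UpClosure le B) := (hR0.mono_right (hR.init_subset 0 N.zero_le)).symm
  (Set.subset_sdiff.mpr ⟨hR.init_subset k hk, hI⟩).trans sdiff_upClosure_subset_blockFrames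

theorem postSet_blockFrames_subset (hR : IsFrameVector le tr I P N R) (hmN : m ≤ N)
    (hR0 : Disjoint (UpClosure le B) (R 0))
    (hind : Disjoint (PreSet tr (UpClosure le B)) (R m \ UpClosure le B)) (hk : k < N) :
    PostSet tr (blockFrames le B m R k) ⊆ blockFrames le B m R (k + 1) := by
  have hpost : PostSet tr (blockFrames le B m R k) ⊆ R (k + 1) :=
    (postSet_mono blockFrames_subset).trans (hR.postSet_subset k hk)
  rcases lt_or_ge m (k + 1) with hmk | hkm
  · rwa [blockFrames_of_lt hmk]
  · have hsub : blockFrames le B m R k ⊆ R m \ UpClosure le B := by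
      rw [blockFrames_of_le hR0 (by lia)]
      exact Set.sdiff_subset_sdiff_left (hR.monotoneOn hk.le hmN (by lia))
    rw [blockFrames_of_le hR0 hkm]
    exact Set.subset_sdiff.mpr
      ⟨hpost, (disjoint_postSet_left_iff.mpr hind).mono_left (postSet_mono hsub)⟩

theorem blockFrames_subset_succ (hR : IsFrameVector le tr I P N R)
    (hR0 : Disjoint (UpClosure le B) (R 0)) (hk : k < N) :
    blockFrames le B m R k ⊆ blockFrames le B m R (k + 1) := by
  rcases lt_or_ge m (k + 1) with hmk | hkm
  · rw [blockFrames_of_lt hmk]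
    exact blockFrames_subset.trans (hR.subset_succ k hk)
  · rw [blockFrames_of_le hR0 hkm, blockFrames_of_le hR0 (by lia)]
    exact Set.sdiff_subset_sdiff_left (hR.subset_succ k hk)

end IsFrameVector

theorem stmt6_general [IsPreorder σ le] (hR : IsFrameVector le tr I P N R) (hmN : m ≤ N)
    (hR0 : Disjoint (UpClosure le B) (R 0))
    (hind : Disjoint (PreSet tr (UpClosure le B)) (R m \ UpClosure le B)) :
    IsFrameVector le tr I P N (blockFrames le B m R) where
  eq_downClosure _ hi := hR.blockFrames_eq_downClosure hi
  init_subset _ hi := hR.init_subset_blockFrames hR0 hi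
  postSet_subset _ hi := hR.postSet_blockFrames_subset hmN hR0 hind hi
  subset_succ _ hi := hR.blockFrames_subset_succ hR0 hi
  subset_safe i hi := blockFrames_subset.trans (hR.subset_safe i hi)

end Frames

/-- Blocking a valid generalization `b` up to level `m` preserves invariants (I1)-(I4). -/
theorem stmt6 {σ : Type*} (le tr : σ → σ → Prop) (I : Set σ)
    (hwqo : IsWqo le) (hIfin : I.Finite) (hcompat : Compat tr le)
    (P : Set σ) (hP : P = DownClosure le P)
    (N : ℕ) (R : ℕ → Set σ) (hR0 : R 0 = DownClosure le I)
    (hdown : ∀ i ≤ N, R i = DownClosure le (R i))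
    (hI1 : ∀ i ≤ N, I ⊆ R i)
    (hI2 : ∀ i < N, PostSet tr (R i) ⊆ R (i+1))
    (hI3 : ∀ i < N, R i ⊆ R (i+1))
    (hI4 : ∀ i < N, R i ⊆ P)
    (m : ℕ) (hm1 : 1 ≤ m) (hmN : m ≤ N)
    (b : σ) (hbI : UpClosure le {b} ∩ I = ∅)
    (hbInd : PreSet tr (UpClosure le {b}) ∩ (R m \ UpClosure le {b}) = ∅)
    (R' : ℕ → Set σ)
    (hR' : ∀ k, R' k = if 1 ≤ k ∧ k ≤ m then R k \ UpClosure le {b} else R k) :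
    (∀ i ≤ N, R' i = DownClosure le (R' i)) ∧
      (∀ i ≤ N, I ⊆ R' i) ∧
      (∀ i < N, PostSet tr (R' i) ⊆ R' (i+1)) ∧
      (∀ i < N, R' i ⊆ R' (i+1)) ∧
      (∀ i < N, R' i ⊆ P) := by
  have := hwqo.isPreorder
  obtain rfl : R' = blockFrames le {b} m R := funext hR'
  rw [← Set.disjoint_iff_inter_eq_empty] at hbI hbInd
  obtain ⟨hdown', hI1', hI2', hI3', hI4'⟩ := stmt6_general ⟨hdown, hI1, hI2, hI3, hI4⟩ hmN
    (hR0 ▸ disjoint_upClosure_downClosure hbI) hbInd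
  exact ⟨hdown', hI1', hI2', hI3', hI4'⟩
end

section
/- Let (Σ, I, →, ≼) be a WSTS, let P ⊆ Σ be downward-closed, let R = (R_0, …, R_N) be a vector of downward-closed subsets of Σ satisfying invariants (I1)–(I4), and let U_0 := Σ \ P, U_{i+1} := U_i ∪ Pre(U_i). Then R_{N−1−i} ∩ U_i = ∅ for all i with 0 ≤ i < N − 1. -/
/-! A state of `R k` stays in `R (k + 1)`, whether it takes a transition or not. Hence if `R (k + 1)`
avoids `U i`, then `R k` avoids both `U i` and its predecessors, that is, `U (i + 1)`: each step
back from the complement of `P` costs one index of `R`. -/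

section BackwardReachability

variable {σ : Type*} {tr : σ → σ → Prop}

theorem disjoint_preSet_iff_disjoint_postSet {X Y : Set σ} :
    Disjoint X (PreSet tr Y) ↔ Disjoint (PostSet tr X) Y := by
  simp only [Set.disjoint_left]
  constructor
  · rintro h y ⟨x, hx, hxy⟩ hy
    exact h hx ⟨y, hy, hxy⟩
  · rintro h x hx ⟨y, hy, hxy⟩
    exact h ⟨x, hx, hxy⟩ hy

theorem disjoint_union_preSet {X Y Z : Set σ} (hYZ : Disjoint Y Z)
    (hXY : X ⊆ Y) (hpost : PostSet tr X ⊆ Y) : Disjoint X (Z ∪ PreSet tr Z) :=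
  Set.disjoint_union_right.2
    ⟨hYZ.mono_left hXY, disjoint_preSet_iff_disjoint_postSet.2 (hYZ.mono_left hpost)⟩

end BackwardReachability

theorem stmt7_general {σ : Type*} (tr : σ → σ → Prop) (P : Set σ) (N : ℕ) (R : ℕ → Set σ)
    (hI2 : ∀ i < N, PostSet tr (R i) ⊆ R (i + 1))
    (hI3 : ∀ i < N, R i ⊆ R (i + 1))
    (hI4 : ∀ i < N, R i ⊆ P)
    (U : ℕ → Set σ) (hU0 : U 0 = Pᶜ) (hUs : ∀ i, U (i + 1) = U i ∪ PreSet tr (U i))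
    (i k : ℕ) (hik : i + k < N) : Disjoint (R k) (U i) := by
  induction i generalizing k with
  | zero =>
    rw [hU0, Set.disjoint_compl_right_iff_subset]
    exact hI4 k (by omega)
  | succ i ih =>
    have hk : k < N := by omega
    rw [hUs]
    exact disjoint_union_preSet (ih (k + 1) (by omega)) (hI3 k hk) (hI2 k hk)

/-- Disjointness of the approximations `R` and the backward reachability sets `U`. -/
theorem stmt7 {σ : Type*} (le tr : σ → σ → Prop) (I : Set σ)
    (hwqo : IsWqo le) (hIfin : I.Finite) (hcompat : Compat tr le)
    (P : Set σ) (hP : P = DownClosure le P)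
    (N : ℕ) (R : ℕ → Set σ)
    (hdown : ∀ i ≤ N, R i = DownClosure le (R i))
    (hI1 : ∀ i ≤ N, I ⊆ R i)
    (hI2 : ∀ i < N, PostSet tr (R i) ⊆ R (i+1))
    (hI3 : ∀ i < N, R i ⊆ R (i+1))
    (hI4 : ∀ i < N, R i ⊆ P)
    (U : ℕ → Set σ) (hU0 : U 0 = Pᶜ) (hUs : ∀ i, U (i+1) = U i ∪ PreSet tr (U i)) :
    ∀ i, i < N - 1 → R (N - 1 - i) ∩ U i = ∅ := by
  intro i hi
  exact (stmt7_general tr P N R hI2 hI3 hI4 U hU0 hUs i (N - 1 - i) (by omega)).inter_eq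
end

section
/- Let (Σ, I, →, ≼) be a WSTS with ≼ antisymmetric, let P ⊆ Σ be downward-closed, let R = (R_0, …, R_N) be a vector of downward-closed subsets of Σ satisfying invariants (I1)–(I4), let U_0 := Σ \ P, U_{i+1} := U_i ∪ Pre(U_i), and let D_0 := min(Σ \ P), D_{i+1} := (⋃_{a ∈ D_i} min(Pre(↑{a}))) \ U_i. Then for every i with 0 ≤ i < N − 1 and every a ∈ D_i: if Pre(↑{a}) ∩ R_{N−i−1} ≠ ∅, then there exists x ∈ Pre(↑{a}) ∩ D_{i+1} ∩ R_{N−i−1}. -/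
theorem IsWqo.wellFounded {σ : Type*} {le : σ → σ → Prop} (h : IsWqo le) :
    WellFounded fun x y => le x y ∧ ¬ le y x := by
  obtain ⟨hrefl, htrans, hwqo⟩ := h
  have : IsPreorder σ le := { refl := hrefl, trans := fun _ _ _ => @htrans _ _ _ }
  exact WellQuasiOrdered.wellFounded hwqo

theorem minSet_inter_subset {σ : Type*} {le : σ → σ → Prop} {L : Set σ}
    (hL : DownClosure le L ⊆ L) (Y : Set σ) : MinSet le (Y ∩ L) ⊆ MinSet le Y :=
  fun x ⟨⟨hxY, hxL⟩, hmin⟩ => ⟨hxY, fun z hzY hzx => hmin z ⟨hzY, hL ⟨x, hxL, hzx⟩⟩ hzx⟩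

theorem minSet_nonempty {σ : Type*} {le : σ → σ → Prop}
    (hwf : WellFounded fun x y => le x y ∧ ¬ le y x) {Y : Set σ} (hY : Y.Nonempty) :
    (MinSet le Y).Nonempty := by
  obtain ⟨x, hxY, hmin⟩ := hwf.has_min Y hY
  exact ⟨x, hxY, fun z hzY hzx => not_not.1 fun hxz => hmin z hzY ⟨hzx, hxz⟩⟩

theorem disjoint_preSet_right_iff {σ : Type*} {tr : σ → σ → Prop} {X Y : Set σ} :
    Disjoint X (PreSet tr Y) ↔ Disjoint (PostSet tr X) Y := by
  simp only [Set.disjoint_left]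
  exact ⟨fun h y ⟨x, hxX, hxy⟩ hyY => h hxX ⟨y, hyY, hxy⟩,
    fun h x hxX ⟨y, hyY, hxy⟩ => h ⟨x, hxX, hxy⟩ hyY⟩

theorem disjoint_of_postSet_subset_succ {σ : Type*} {tr : σ → σ → Prop} {N : ℕ} {R U : ℕ → Set σ}
    (hpost : ∀ i < N, PostSet tr (R i) ⊆ R (i + 1))
    (hUs : ∀ i, U (i + 1) = U i ∪ PreSet tr (U i)) (hzero : ∀ i < N, Disjoint (R i) (U 0)) :
    ∀ {i j : ℕ}, i + j < N → Disjoint (R j) (U i)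
  | 0, j, hij => hzero j (by omega)
  | i + 1, j, hij => by
    have hstay : Disjoint (R j) (U i) :=
      disjoint_of_postSet_subset_succ hpost hUs hzero (by omega)
    have hnext : Disjoint (R (j + 1)) (U i) :=
      disjoint_of_postSet_subset_succ hpost hUs hzero (by omega)
    rw [hUs, Set.disjoint_union_right, disjoint_preSet_right_iff]
    exact ⟨hstay, hnext.mono_left (hpost j (by omega))⟩

theorem stmt12_general {σ : Type*} {le tr : σ → σ → Prop}
    (hwf : WellFounded fun x y => le x y ∧ ¬ le y x) {P : Set σ} {N : ℕ} {R : ℕ → Set σ}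
    (hdown : ∀ i < N, DownClosure le (R i) ⊆ R i)
    (hpost : ∀ i < N, PostSet tr (R i) ⊆ R (i + 1)) (hP : ∀ i < N, R i ⊆ P)
    {U D : ℕ → Set σ} (hU0 : U 0 = Pᶜ) (hUs : ∀ i, U (i + 1) = U i ∪ PreSet tr (U i))
    (hDs : ∀ i, D (i + 1) =
      (⋃ a ∈ D i, MinSet le (PreSet tr (UpClosure le {a}))) \ U i)
    {i j : ℕ} (hij : i + j < N) {a : σ} (ha : a ∈ D i)
    (hne : (PreSet tr (UpClosure le {a}) ∩ R j).Nonempty) :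
    ∃ x, x ∈ PreSet tr (UpClosure le {a}) ∧ x ∈ D (i + 1) ∧ x ∈ R j := by
  obtain ⟨x, hx⟩ := minSet_nonempty hwf hne
  obtain ⟨hxPre, hxR⟩ := hx.1
  have hxmin : x ∈ MinSet le (PreSet tr (UpClosure le {a})) :=
    minSet_inter_subset (hdown j (by omega)) _ hx
  have hzero : ∀ k < N, Disjoint (R k) (U 0) := fun k hk =>
    hU0 ▸ disjoint_compl_right_iff.2 (hP k hk)
  have hxU : x ∉ U i :=
    (disjoint_of_postSet_subset_succ hpost hUs hzero hij).notMem_of_mem_left hxR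
  exact ⟨x, hxPre, hDs i ▸ ⟨Set.mem_biUnion ha hxmin, hxU⟩, hxR⟩

/-- If a state `a ∈ D i` has a predecessor in `R (N-i-1)`, it has one that lies
in `D (i+1)` as well. -/
theorem stmt12 {σ : Type*} (le tr : σ → σ → Prop) (I : Set σ)
    (hwqo : IsWqo le) (hanti : ∀ x y, le x y → le y x → x = y)
    (hIfin : I.Finite) (hcompat : Compat tr le)
    (P : Set σ) (hP : P = DownClosure le P)
    (N : ℕ) (R : ℕ → Set σ)
    (hdown : ∀ i ≤ N, R i = DownClosure le (R i))
    (hI1 : ∀ i ≤ N, I ⊆ R i)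
    (hI2 : ∀ i < N, PostSet tr (R i) ⊆ R (i+1))
    (hI3 : ∀ i < N, R i ⊆ R (i+1))
    (hI4 : ∀ i < N, R i ⊆ P)
    (U D : ℕ → Set σ)
    (hU0 : U 0 = Pᶜ) (hUs : ∀ i, U (i+1) = U i ∪ PreSet tr (U i))
    (hD0 : D 0 = MinSet le Pᶜ)
    (hDs : ∀ i, D (i+1) =
      (⋃ a ∈ D i, MinSet le (PreSet tr (UpClosure le {a}))) \ U i) :
    ∀ i, i < N - 1 → ∀ a ∈ D i,
      (PreSet tr (UpClosure le {a}) ∩ R (N - i - 1)).Nonempty →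
      ∃ x, x ∈ PreSet tr (UpClosure le {a}) ∧ x ∈ D (i+1) ∧ x ∈ R (N - i - 1) := by
  intro i hi a ha hne
  exact stmt12_general hwqo.wellFounded (fun k hk => (hdown k hk.le).ge) hI2 hI4 hU0 hUs hDs
    (by omega) ha hne
end

section
/- Fix n ≥ 1, let a, c, g ∈ ℕⁿ and d ∈ ℤⁿ, and suppose c ≤ max(a − d, g) componentwise in ℤ. Define a'' ∈ ℤⁿ by a''_j := c_j + d_j if g_j < c_j, and a''_j := 0 if g_j ≥ c_j, for j = 1, …, n. Then a'' ≤ a componentwise, and for every a' ∈ ℕⁿ with a'' ≤ a' ≤ a componentwise, one has c ≤ max(a' − d, g) componentwise in ℤ. -/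
/-!
For a marking `x`, the conditions `a'' ≤ x` and `c ≤ max (x - d) g` are equivalent, one coordinate
at a time: where `c j ≤ g j` both hold, and where `g j < c j` the maximum can only dominate `c j`
through its first argument, which means `c j + d j ≤ x j`.
-/

section OrderedGroup

variable {ι G : Type*} [AddGroup G] [LinearOrder G] [AddRightMono G]

theorem ite_add_le_iff_le_max_sub {c d g m x : G} (hx : m ≤ x) :
    (if g < c then c + d else m) ≤ x ↔ c ≤ max (x - d) g := by
  split_ifs with hgc
  · rw [le_max_iff, or_iff_left hgc.not_ge, le_sub_iff_add_le]
  · exact iff_of_true hx (le_max_of_le_right (not_lt.mp hgc))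

theorem stmt16_general {c d g a'' x : ι → G}
    (ha'' : ∀ j, a'' j = if g j < c j then c j + d j else 0) (hx : ∀ j, 0 ≤ x j) :
    (∀ j, a'' j ≤ x j) ↔ ∀ j, c j ≤ max (x j - d j) (g j) :=
  forall_congr' fun j => ha'' j ▸ ite_add_le_iff_le_max_sub (hx j)

end OrderedGroup

/-- Generalization of a state w.r.t. a blocking state `c`: the state `a''` lies below `a`,
and any `a'` between `a''` and `a` keeps its predecessor blocked by `c`. -/
theorem stmt16 (n : ℕ) (hn : 1 ≤ n) (a c g : Fin n → ℕ) (d : Fin n → ℤ)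
    (hc : ∀ j, (c j : ℤ) ≤ max ((a j : ℤ) - d j) ((g j : ℤ)))
    (a'' : Fin n → ℤ)
    (ha'' : ∀ j, a'' j = if (g j : ℤ) < (c j : ℤ) then (c j : ℤ) + d j else 0) :
    (∀ j, a'' j ≤ (a j : ℤ)) ∧
      ∀ a' : Fin n → ℕ, (∀ j, a'' j ≤ (a' j : ℤ)) → (∀ j, (a' j : ℤ) ≤ (a j : ℤ)) →
        ∀ j, (c j : ℤ) ≤ max ((a' j : ℤ) - d j) ((g j : ℤ)) := by
  have le_iff_blocked (x : Fin n → ℕ) := stmt16_general ha'' fun j => Int.natCast_nonneg (x j)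
  exact ⟨(le_iff_blocked a).mpr hc, fun a' ha' _ => (le_iff_blocked a').mp ha'⟩
end
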